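/- arXiv:math/0502144 — 2 statements merged into one kernel-verified Lean document; each statement's English description precedes it below -/
import Mathlib

section
/- Let I be a homogeneous ideal in R = k[x_1,...,x_n,y] with Gröbner basis {y^{d_i} q_i + r_i} as above, and let I', C, P be as defined. Then the Hilbert series satisfy h_{R/I}(s) ≥ h_{R/P}(s) + s·h_{R/C}(s) coefficientwise, with equality if and only if I' = C ∩ P. -/
open MvPolynomial

noncomputable section

/-- The variable `y` (the last variable) in `R = k[x_1,…,x_n,y]`. -/
def yv (k : Type*) [Field k] (n : ℕ) : MvPolynomial (Fin (n + 1)) k :=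
  X (Fin.last n)

/-- The degree in `y` (the last variable). -/
def ydeg {k : Type*} [Field k] {n : ℕ} (p : MvPolynomial (Fin (n + 1)) k) : ℕ :=
  p.support.sup (fun m => m (Fin.last n))

/-- The initial `y`-form of `p`: the sum of all terms of `p` having the highest
power of `y`. -/
def iny {k : Type*} [Field k] {n : ℕ} (p : MvPolynomial (Fin (n + 1)) k) :
    MvPolynomial (Fin (n + 1)) k :=
  ∑ m ∈ p.support.filter (fun m => m (Fin.last n) = ydeg p), monomial m (p.coeff m)

/-- A term order on the monomials of a polynomial ring: a linear order on exponent
vectors compatible with addition and with `0` smallest. -/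
structure TermOrder (σ : Type*) where
  lo : LinearOrder (σ →₀ ℕ)
  add_le : ∀ a b c : σ →₀ ℕ, lo.le a b → lo.le (a + c) (b + c)
  zero_le : ∀ a : σ →₀ ℕ, lo.le 0 a

/-- The leading monomial of `p` (as an element of `WithBot`; `⊥` for `p = 0`). -/
def lm {k : Type*} [Field k] {σ : Type*} (ord : TermOrder σ)
    (p : MvPolynomial σ k) : WithBot (σ →₀ ℕ) :=
  letI := ord.lo
  p.support.max

/-- The leading term of `p` under the term order `ord`. -/
def leadTerm {k : Type*} [Field k] {σ : Type*} (ord : TermOrder σ)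
    (p : MvPolynomial σ k) : MvPolynomial σ k :=
  letI := ord.lo
  if h : p.support.Nonempty then
    monomial (p.support.max' h) (p.coeff (p.support.max' h))
  else 0

/-- The initial ideal of `J` under `ord`: generated by the leading terms of the
nonzero elements of `J`. -/
def initIdeal {k : Type*} [Field k] {σ : Type*} (ord : TermOrder σ)
    (J : Ideal (MvPolynomial σ k)) : Ideal (MvPolynomial σ k) :=
  Ideal.span { t | ∃ f ∈ J, f ≠ 0 ∧ t = leadTerm ord f }

/-- `g` is a Gröbner basis of `I` with respect to `ord`: the `g i` lie in `I`,
generate it, and the leading monomial of every nonzero element of `I` is divisible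
by the leading monomial of some `g i`. -/
def IsGB {k : Type*} [Field k] {σ : Type*} {ι : Type*} (ord : TermOrder σ)
    (I : Ideal (MvPolynomial σ k)) (g : ι → MvPolynomial σ k) : Prop :=
  (∀ i, g i ∈ I) ∧ I = Ideal.span (Set.range g) ∧
    ∀ f ∈ I, f ≠ 0 → ∃ (i : ι) (a b : σ →₀ ℕ),
      lm ord (g i) = (a : WithBot (σ →₀ ℕ)) ∧
      lm ord f = ((a + b : σ →₀ ℕ) : WithBot (σ →₀ ℕ))

/-- The `e`-th coefficient of the Hilbert series of `R/I` for the standard grading: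
the `k`-dimension of the image of the degree-`e` homogeneous component of `R`
in `R/I`. -/
def hilb {k : Type*} [Field k] {n : ℕ} (I : Ideal (MvPolynomial (Fin (n + 1)) k))
    (e : ℕ) : ℕ :=
  Module.finrank k
    (Submodule.map (Ideal.Quotient.mkₐ k I).toLinearMap
      (MvPolynomial.homogeneousSubmodule (Fin (n + 1)) k e))


section helpers

variable {k : Type*} [Field k] {n : ℕ}

/-- The component of `y`-degree `j`. -/
def yc (j : ℕ) : MvPolynomial (Fin (n + 1)) k →ₗ[k] MvPolynomial (Fin (n + 1)) k :=
  weightedHomogeneousComponent (Pi.single (Fin.last n) 1 : Fin (n + 1) → ℕ) j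

lemma coeff_yc (j : ℕ) (f : MvPolynomial (Fin (n + 1)) k) (u : Fin (n + 1) →₀ ℕ) :
    coeff u (yc j f) = if u (Fin.last n) = j then coeff u f else 0 := by
  have : Finsupp.weight (Pi.single (Fin.last n) 1 : Fin (n + 1) → ℕ) u = u (Fin.last n) := by
    rw [Finsupp.weight_apply, Finsupp.sum_fintype _ _ (by simp)]
    simp [Pi.single_apply]
  rw [yc, coeff_weightedHomogeneousComponent, this]

/-- Polynomials of `y`-degree `< j`. -/
def yf (k : Type*) [Field k] (n : ℕ) (j : ℕ) : Submodule k (MvPolynomial (Fin (n + 1)) k) where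
  carrier := {f | ∀ u : Fin (n + 1) →₀ ℕ, j ≤ u (Fin.last n) → coeff u f = 0}
  add_mem' := by
    intro a b ha hb u hu
    rw [coeff_add, ha u hu, hb u hu, add_zero]
  zero_mem' := by
    intro u hu
    simp
  smul_mem' := by
    intro c a ha u hu
    rw [coeff_smul, ha u hu, smul_zero]

lemma mem_yf {j : ℕ} {f : MvPolynomial (Fin (n + 1)) k} :
    f ∈ yf k n j ↔ ∀ u : Fin (n + 1) →₀ ℕ, j ≤ u (Fin.last n) → coeff u f = 0 := Iff.rfl

lemma yc_monomial_mul (j : ℕ) (b : Fin (n + 1) →₀ ℕ) (c : k)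
    (f : MvPolynomial (Fin (n + 1)) k) :
    yc j (monomial b c * f) =
      if b (Fin.last n) ≤ j then monomial b c * yc (j - b (Fin.last n)) f else 0 := by
  ext u
  rw [coeff_yc, coeff_monomial_mul']
  split_ifs with h1 h2 h3 h3 h3
  · rw [coeff_monomial_mul', if_pos h2, coeff_yc, if_pos]
    simp [h1]
  · have := h2 (Fin.last n)
    omega
  · rw [coeff_monomial_mul', if_neg h2]
  · simp
  · rw [coeff_monomial_mul']
    split_ifs with h4
    · rw [coeff_yc, if_neg, mul_zero]
      have := h4 (Fin.last n)
      simp only [Finsupp.coe_tsub, Pi.sub_apply]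
      omega
    · rfl
  · simp

lemma yc_mem_of_gens (S : Set (MvPolynomial (Fin (n + 1)) k))
    (K : Ideal (MvPolynomial (Fin (n + 1)) k)) (j : ℕ)
    (h : ∀ s ∈ S, ∀ i ≤ j, yc i s ∈ K) (f : MvPolynomial (Fin (n + 1)) k)
    (hf : f ∈ Ideal.span S) : ∀ i ≤ j, yc i f ∈ K := by
  induction hf using Submodule.span_induction with
  | mem x hx => exact h x hx
  | zero => intro i _; simp
  | add x y _ _ hx hy => intro i hi; rw [map_add]; exact K.add_mem (hx i hi) (hy i hi)
  | smul a x _ hx =>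
    induction a using MvPolynomial.induction_on' with
    | monomial b c =>
      intro i hi
      rw [smul_eq_mul, yc_monomial_mul]
      split_ifs
      · exact K.mul_mem_left _ (hx _ (by omega))
      · exact K.zero_mem
    | add p q hp hq =>
      intro i hi
      rw [add_smul, map_add]
      exact K.add_mem (hp i hi) (hq i hi)

lemma mem_of_yc (K : Ideal (MvPolynomial (Fin (n + 1)) k)) (f : MvPolynomial (Fin (n + 1)) k)
    (h : ∀ j, yc j f ∈ K) : f ∈ K := by
  have : f = ∑ j ∈ Finset.range (ydeg f + 1), yc j f := by
    ext u
    simp only [coeff_sum, coeff_yc]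
    rw [Finset.sum_ite_eq]
    split_ifs with hu
    · rfl
    · by_contra hne
      apply hu
      have : u (Fin.last n) ≤ ydeg f :=
        Finset.le_sup (f := fun m : Fin (n + 1) →₀ ℕ => m (Fin.last n)) (mem_support_iff.2 hne)
      simp
      omega
  rw [this]
  exact K.sum_mem fun j _ => h j

lemma yc_homogeneousComponent (j e : ℕ) (f : MvPolynomial (Fin (n + 1)) k) :
    yc j (homogeneousComponent e f) = homogeneousComponent e (yc j f) := by
  ext u
  simp only [coeff_yc, coeff_homogeneousComponent]
  split_ifs <;> rfl

lemma yc_yc (j : ℕ) (f : MvPolynomial (Fin (n + 1)) k) : yc j (yc j f) = yc j f := by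
  ext u
  simp only [coeff_yc]
  split_ifs <;> rfl

lemma yc_mem_yf (j : ℕ) (f : MvPolynomial (Fin (n + 1)) k) : yc j f ∈ yf k n (j + 1) := by
  intro u hu
  rw [coeff_yc, if_neg (by omega)]

lemma homogeneousComponent_mem_yf (j e : ℕ) (f : MvPolynomial (Fin (n + 1)) k)
    (hf : f ∈ yf k n j) : homogeneousComponent e f ∈ yf k n j := by
  intro u hu
  rw [coeff_homogeneousComponent, hf u hu, ite_self]

lemma yc_of_mem_yf {i j : ℕ} (hij : j ≤ i) {f : MvPolynomial (Fin (n + 1)) k}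
    (hf : f ∈ yf k n j) : yc i f = 0 := by
  ext u
  rw [coeff_yc]
  split_ifs with h
  · rw [hf u (by omega), coeff_zero]
  · simp

lemma monomial_mul_mem_yf {j : ℕ} (b : Fin (n + 1) →₀ ℕ) (c : k)
    {f : MvPolynomial (Fin (n + 1)) k} (hf : f ∈ yf k n j) :
    monomial b c * f ∈ yf k n (b (Fin.last n) + j) := by
  intro u hu
  rw [coeff_monomial_mul']
  split_ifs with h
  · rw [hf _ (by simp only [Finsupp.coe_tsub, Pi.sub_apply]; omega), mul_zero]
  · rfl

lemma yf_mono {i j : ℕ} (hij : i ≤ j) : yf k n i ≤ yf k n j :=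
  fun _ hf u hu => hf u (by omega)

/-- Every polynomial is its `y = 0` part plus `y` times something. -/
lemma yc_zero_add (f : MvPolynomial (Fin (n + 1)) k) :
    f = yc 0 f + yv k n * divMonomial f (Finsupp.single (Fin.last n) 1) := by
  ext u
  rw [coeff_add, coeff_yc, yv, coeff_X_mul']
  by_cases h : u (Fin.last n) = 0
  · simp [h]
  · rw [if_neg h, if_pos (by simpa using h), coeff_divMonomial, zero_add]
    congr 1
    ext i
    by_cases hi : i = Fin.last n
    · subst hi; simp; omega
    · simp [Ne.symm hi]

lemma yc_zero_yv_mul (f : MvPolynomial (Fin (n + 1)) k) : yc 0 (yv k n * f) = 0 := by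
  rw [yv, X, yc_monomial_mul]
  simp

lemma homogeneousComponent_yv_mul (e : ℕ) (f : MvPolynomial (Fin (n + 1)) k) :
    homogeneousComponent (e + 1) (yv k n * f) = yv k n * homogeneousComponent e f := by
  ext u
  simp only [coeff_homogeneousComponent, yv, coeff_X_mul']
  by_cases h : u (Fin.last n) = 0
  · simp [h]
  · have hs : Finsupp.single (Fin.last n) 1 ≤ u := by
      rw [Finsupp.single_le_iff]; omega
    obtain ⟨v, rfl⟩ := exists_add_of_le hs
    simp [map_add, add_comm 1]

lemma yc_eq_self_of {f : MvPolynomial (Fin (n + 1)) k} (hf : f ∈ yf k n 1) : yc 0 f = f := by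
  ext u
  rw [coeff_yc]
  split_ifs with h
  · rfl
  · rw [hf u (by omega)]

lemma divMonomial_mul_yfree (a : MvPolynomial (Fin (n + 1)) k)
    {g : MvPolynomial (Fin (n + 1)) k} (hg : g ∈ yf k n 1) :
    divMonomial (a * g) (Finsupp.single (Fin.last n) 1) =
      divMonomial a (Finsupp.single (Fin.last n) 1) * g := by
  have h2 : a * g = yc 0 a * g + yv k n * (divMonomial a (Finsupp.single (Fin.last n) 1) * g) := by
    conv_lhs => rw [yc_zero_add a]
    ring
  have h3 : yc 0 a * g ∈ yf k n 1 := by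
    have key : ∀ p : MvPolynomial (Fin (n + 1)) k, yc 0 p * g ∈ yf k n 1 := by
      intro p
      induction p using MvPolynomial.induction_on' with
      | monomial b c =>
        have : yc 0 (monomial b c) = if b (Fin.last n) = 0 then monomial b c else 0 := by
          ext u
          rw [coeff_yc]
          split_ifs with h1 h2 h2 <;> simp only [coeff_monomial, coeff_zero]
          · rw [if_neg]; rintro rfl; exact h2 h1
          · rw [if_neg]; rintro rfl; exact h1 h2
        rw [this]
        split_ifs with h
        · have := monomial_mul_mem_yf b c hg
          rwa [h] at this
        · rw [zero_mul]; exact Submodule.zero_mem _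
      | add p q hp hq => rw [map_add, add_mul]; exact Submodule.add_mem _ hp hq
    exact key a
  rw [h2, add_divMonomial, yv, X_mul_divMonomial]
  convert zero_add _
  ext u
  rw [coeff_divMonomial, h3 _ (by simp), coeff_zero]

/-- An ideal generated by `y`-free polynomials is saturated with respect to `y`. -/
lemma mem_of_yv_mul_mem {S : Set (MvPolynomial (Fin (n + 1)) k)} (hS : ∀ s ∈ S, s ∈ yf k n 1)
    {f : MvPolynomial (Fin (n + 1)) k} (hf : yv k n * f ∈ Ideal.span S) : f ∈ Ideal.span S := by
  have key : ∀ g ∈ Ideal.span S,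
      divMonomial g (Finsupp.single (Fin.last n) 1) ∈ Ideal.span S := by
    intro g hg
    induction hg using Submodule.span_induction with
    | mem x hx =>
      have := divMonomial_mul_yfree 1 (hS x hx)
      rw [one_mul] at this
      rw [this]
      exact Ideal.mul_mem_left _ _ (Ideal.subset_span hx)
    | zero => simp
    | add x y _ _ hx hy => rw [add_divMonomial]; exact Ideal.add_mem _ hx hy
    | smul a x hx' hx =>
      have : ∀ z ∈ Ideal.span S, ∀ b : MvPolynomial (Fin (n + 1)) k,
          divMonomial (b * z) (Finsupp.single (Fin.last n) 1) ∈ Ideal.span S := by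
        intro z hz
        induction hz using Submodule.span_induction with
        | mem x hx =>
          intro b
          rw [divMonomial_mul_yfree b (hS x hx)]
          exact Ideal.mul_mem_left _ _ (Ideal.subset_span hx)
        | zero => simp
        | add x y _ _ hx hy =>
          intro b
          rw [mul_add, add_divMonomial]; exact Ideal.add_mem _ (hx b) (hy b)
        | smul a x _ hx =>
          intro b
          rw [smul_eq_mul, ← mul_assoc]
          exact hx _
      exact this x hx' a
  have := key _ hf
  rwa [yv, X_mul_divMonomial] at this

/-- Rank-nullity for the restriction of a linear map to a submodule. -/
lemma rank_nullity {V : Type*} [AddCommGroup V] [Module k V] (T : V →ₗ[k] V) (W : Submodule k V)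
    [FiniteDimensional k W] :
    Module.finrank k (Submodule.map T W) + Module.finrank k (W ⊓ LinearMap.ker T : Submodule k V) =
      Module.finrank k W := by
  have h := LinearMap.finrank_range_add_finrank_ker (T.domRestrict W)
  rw [LinearMap.range_domRestrict] at h
  rw [← h]
  congr 1
  have h2 : (W ⊓ LinearMap.ker T : Submodule k V) =
      Submodule.map W.subtype (LinearMap.ker (T.domRestrict W)) := by
    ext x
    simp [LinearMap.mem_ker, and_comm]
  rw [h2]
  rw [Submodule.finrank_map_subtype_eq]

/-- Degree `e` part of an ideal. -/
def dp (J : Ideal (MvPolynomial (Fin (n + 1)) k)) (e : ℕ) :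
    Submodule k (MvPolynomial (Fin (n + 1)) k) :=
  homogeneousSubmodule (Fin (n + 1)) k e ⊓ J.restrictScalars k

lemma mem_dp {J : Ideal (MvPolynomial (Fin (n + 1)) k)} {e : ℕ}
    {f : MvPolynomial (Fin (n + 1)) k} : f ∈ dp J e ↔ f.IsHomogeneous e ∧ f ∈ J := by
  simp [dp]

instance fin_hom (e : ℕ) : FiniteDimensional k (homogeneousSubmodule (Fin (n + 1)) k e) :=
  Module.Finite.iff_fg.2 (homogeneousSubmodule_fg _ _ e)

instance fin_dp (J : Ideal (MvPolynomial (Fin (n + 1)) k)) (e : ℕ) :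
    FiniteDimensional k (dp J e) :=
  Submodule.finiteDimensional_of_le (inf_le_left)

lemma hilb_add (J : Ideal (MvPolynomial (Fin (n + 1)) k)) (e : ℕ) :
    hilb J e + Module.finrank k (dp J e) =
      Module.finrank k (homogeneousSubmodule (Fin (n + 1)) k e) := by
  let W := homogeneousSubmodule (Fin (n + 1)) k e
  have h := LinearMap.finrank_range_add_finrank_ker
    ((Ideal.Quotient.mkₐ k J).toLinearMap.domRestrict W)
  rw [LinearMap.range_domRestrict] at h
  rw [← h]
  unfold hilb
  congr 1
  have h2 : dp J e = Submodule.map W.subtype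
      (LinearMap.ker ((Ideal.Quotient.mkₐ k J).toLinearMap.domRestrict W)) := by
    ext x
    simp [LinearMap.mem_ker, and_comm, mem_dp, W, Ideal.Quotient.eq_zero_iff_mem]
  rw [h2]
  rw [Submodule.finrank_map_subtype_eq]

lemma isHom_iff {e : ℕ} {f : MvPolynomial (Fin (n + 1)) k} :
    f.IsHomogeneous e ↔ homogeneousComponent e f = f := by
  constructor
  · intro h
    rw [homogeneousComponent_of_mem h, if_pos rfl]
  · intro h
    rw [← h]
    exact homogeneousComponent_isHomogeneous _ _

lemma isHom_yc {e : ℕ} {f : MvPolynomial (Fin (n + 1)) k} (hf : f.IsHomogeneous e) (j : ℕ) :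
    (yc j f).IsHomogeneous e := by
  rw [isHom_iff] at *
  rw [← yc_homogeneousComponent, hf]

lemma yv_ne_zero : yv k n ≠ 0 := X_ne_zero _

lemma isHom_yv_mul {e : ℕ} {f : MvPolynomial (Fin (n + 1)) k} :
    (yv k n * f).IsHomogeneous (e + 1) ↔ f.IsHomogeneous e := by
  rw [isHom_iff, isHom_iff, homogeneousComponent_yv_mul]
  exact mul_right_inj' yv_ne_zero

/-- If two ideals have the same initial `y`-forms in degree `e`, their degree `e` parts have the
same dimension. -/
lemma finrank_eq_of_yc (I J : Ideal (MvPolynomial (Fin (n + 1)) k)) (e : ℕ)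
    (h : ∀ j, Submodule.map (yc j) (dp I e ⊓ yf k n (j + 1)) =
      Submodule.map (yc j) (dp J e ⊓ yf k n (j + 1))) :
    Module.finrank k (dp I e) = Module.finrank k (dp J e) := by
  have hker : ∀ (K : Ideal (MvPolynomial (Fin (n + 1)) k)) (j : ℕ),
      ((dp K e ⊓ yf k n (j + 1)) ⊓ LinearMap.ker (yc j)) = dp K e ⊓ yf k n j := by
    intro K j
    ext f
    simp only [Submodule.mem_inf, LinearMap.mem_ker, and_assoc]
    refine and_congr_right fun _ => ⟨?_, ?_⟩
    · rintro ⟨h1, h2⟩ u hu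
      rcases hu.eq_or_lt with h3 | h3
      · have := congrArg (coeff u) h2
        rwa [coeff_yc, if_pos h3.symm, coeff_zero] at this
      · exact h1 u h3
    · intro h1
      exact ⟨yf_mono (Nat.le_succ j) h1, yc_of_mem_yf le_rfl h1⟩
  have hfin : ∀ (K : Ideal (MvPolynomial (Fin (n + 1)) k)) (j : ℕ),
      FiniteDimensional k (dp K e ⊓ yf k n j : Submodule k _) := fun K j =>
    Submodule.finiteDimensional_of_le (inf_le_left : _ ≤ dp K e)
  have key : ∀ j, Module.finrank k (dp I e ⊓ yf k n j : Submodule k _) =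
      Module.finrank k (dp J e ⊓ yf k n j : Submodule k _) := by
    intro j
    induction j with
    | zero =>
      have h0 : yf k n 0 = ⊥ := by
        rw [eq_bot_iff]
        intro f hf
        rw [Submodule.mem_bot]
        ext u
        rw [hf u (Nat.zero_le _), coeff_zero]
      rw [h0, inf_bot_eq, inf_bot_eq]
    | succ j ih =>
      have := hfin I (j + 1)
      have := hfin J (j + 1)
      rw [← rank_nullity (yc j) (dp I e ⊓ yf k n (j + 1)),
        ← rank_nullity (yc j) (dp J e ⊓ yf k n (j + 1)), hker, hker, h, ih]
  have htop : ∀ (K : Ideal (MvPolynomial (Fin (n + 1)) k)),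
      dp K e ⊓ yf k n (e + 1) = dp K e := by
    intro K
    rw [inf_eq_left]
    intro f hf u hu
    have h1 := (mem_dp.1 hf).1
    by_contra hne
    have h2 : u.degree = e := by
      by_contra h3
      exact hne (h1.coeff_eq_zero h3)
    have h3 : u (Fin.last n) ≤ u.degree := Finsupp.le_degree _ _
    omega
  have := key (e + 1)
  rwa [htop, htop] at this

lemma mem_P_iff {S : Set (MvPolynomial (Fin (n + 1)) k)} (hS : ∀ s ∈ S, s ∈ yf k n 1)
    {f : MvPolynomial (Fin (n + 1)) k} :
    f ∈ Ideal.span S + Ideal.span {yv k n} ↔ yc 0 f ∈ Ideal.span S := by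
  constructor
  · intro hf
    rw [Submodule.add_eq_sup, ← Ideal.span_union] at hf
    refine yc_mem_of_gens _ (Ideal.span S) 0 ?_ f hf 0 le_rfl
    rintro s (hs | hs) i hi
    · obtain rfl : i = 0 := by omega
      rw [yc_eq_self_of (hS s hs)]
      exact Ideal.subset_span hs
    · obtain rfl : i = 0 := by omega
      rw [Set.mem_singleton_iff.1 hs]
      have := yc_zero_yv_mul (1 : MvPolynomial (Fin (n + 1)) k)
      rw [mul_one] at this
      rw [this]
      exact Ideal.zero_mem _
  · intro hf
    rw [yc_zero_add f]
    refine Submodule.add_mem_sup hf ?_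
    exact Ideal.mul_mem_right _ _ (Ideal.subset_span rfl)

lemma hilb_inf {S T : Set (MvPolynomial (Fin (n + 1)) k)} (hST : S ⊆ T)
    (hT : ∀ s ∈ T, s ∈ yf k n 1) (e : ℕ) :
    hilb (Ideal.span T ⊓ (Ideal.span S + Ideal.span {yv k n})) e =
      hilb (Ideal.span S + Ideal.span {yv k n}) e +
        (if e = 0 then 0 else hilb (Ideal.span T) (e - 1)) := by
  have hS : ∀ s ∈ S, s ∈ yf k n 1 := fun s hs => hT s (hST hs)
  have hSC : Ideal.span S ≤ Ideal.span T := Ideal.span_mono hST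
  set P := Ideal.span S + Ideal.span {yv k n} with hP
  have hSP : Ideal.span S ≤ P := le_sup_left
  have e1 := hilb_add (Ideal.span T ⊓ P) e
  have e2 := hilb_add P e
  have r1 := rank_nullity (yc 0) (dp (Ideal.span T ⊓ P) e)
  have r2 := rank_nullity (yc 0) (dp P e)
  have hmap : Submodule.map (yc 0) (dp (Ideal.span T ⊓ P) e) = Submodule.map (yc 0) (dp P e) := by
    apply le_antisymm
    · apply Submodule.map_mono
      intro f hf
      rw [mem_dp] at *
      exact ⟨hf.1, hf.2.2⟩
    · rintro _ ⟨f, hf, rfl⟩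
      rw [SetLike.mem_coe, mem_dp] at hf
      have h0 := (mem_P_iff hS).1 hf.2
      exact ⟨yc 0 f, mem_dp.2 ⟨isHom_yc hf.1 0, hSC h0, hSP h0⟩, yc_yc 0 f⟩
  rw [hmap] at r1
  cases e with
  | zero =>
    have hk : ∀ K : Ideal (MvPolynomial (Fin (n + 1)) k),
        dp K 0 ⊓ LinearMap.ker (yc 0) = ⊥ := by
      intro K
      rw [eq_bot_iff]
      rintro f ⟨hf, hf'⟩
      have h1 := (mem_dp.1 hf).1
      rw [LinearMap.mem_ker.1 hf' |> fun h => (show f = 0 from ?_)]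
      · exact Submodule.zero_mem _
      · rw [← h]
        refine (yc_eq_self_of ?_).symm
        intro u hu
        apply h1.coeff_eq_zero
        have := Finsupp.le_degree (Fin.last n) u
        omega
    rw [hk, finrank_bot] at r1 r2
    simp only [if_true]
    omega
  | succ e =>
    have e3 := hilb_add (Ideal.span T) e
    let M : MvPolynomial (Fin (n + 1)) k →ₗ[k] MvPolynomial (Fin (n + 1)) k :=
      LinearMap.mulLeft k (yv k n)
    have hM : Function.Injective M := fun a b h => mul_left_cancel₀ yv_ne_zero h
    have hker : ∀ f : MvPolynomial (Fin (n + 1)) k, yc 0 f = 0 → ∃ g, f = yv k n * g := by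
      intro f hf
      have := yc_zero_add f
      rw [hf, zero_add] at this
      exact ⟨_, this⟩
    have hyP : ∀ g, yv k n * g ∈ P := fun g =>
      (mem_P_iff hS).2 (by rw [yc_zero_yv_mul]; exact Ideal.zero_mem _)
    have k1 : dp (Ideal.span T ⊓ P) (e + 1) ⊓ LinearMap.ker (yc 0) =
        Submodule.map M (dp (Ideal.span T) e) := by
      ext f
      constructor
      · rintro ⟨hf, hf'⟩
        obtain ⟨g, rfl⟩ := hker f hf'
        have := mem_dp.1 hf
        exact ⟨g, mem_dp.2 ⟨isHom_yv_mul.1 this.1, mem_of_yv_mul_mem hT this.2.1⟩, rfl⟩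
      · rintro ⟨g, hg, rfl⟩
        have hg := mem_dp.1 hg
        exact ⟨mem_dp.2 ⟨isHom_yv_mul.2 hg.1, Ideal.mul_mem_left _ _ hg.2, hyP g⟩,
          yc_zero_yv_mul g⟩
    have k2 : dp P (e + 1) ⊓ LinearMap.ker (yc 0) =
        Submodule.map M (homogeneousSubmodule (Fin (n + 1)) k e) := by
      ext f
      constructor
      · rintro ⟨hf, hf'⟩
        obtain ⟨g, rfl⟩ := hker f hf'
        have := mem_dp.1 hf
        exact ⟨g, isHom_yv_mul.1 this.1, rfl⟩
      · rintro ⟨g, hg, rfl⟩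
        exact ⟨mem_dp.2 ⟨isHom_yv_mul.2 hg, hyP g⟩, yc_zero_yv_mul g⟩
    rw [k1, ← (Submodule.equivMapOfInjective M hM _).finrank_eq] at r1
    rw [k2, ← (Submodule.equivMapOfInjective M hM _).finrank_eq] at r2
    simp only [Nat.add_eq_zero_iff, one_ne_zero, and_false, if_false, Nat.add_sub_cancel]
    omega

/-! ### Term orders -/

lemma finset_max_iff {α : Type*} [LinearOrder α] (s : Finset α) (a : α) :
    s.max = (a : WithBot α) ↔ a ∈ s ∧ ∀ v ∈ s, v ≤ a := by
  constructor
  · intro h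
    exact ⟨Finset.mem_of_max h, fun v hv => Finset.le_max_of_eq hv h⟩
  · rintro ⟨h1, h2⟩
    apply le_antisymm
    · exact Finset.max_le fun v hv => WithBot.coe_le_coe.2 (h2 v hv)
    · exact Finset.le_max h1

lemma lm_coe_iff {σ : Type*} (ord : TermOrder σ) (p : MvPolynomial σ k) (a : σ →₀ ℕ) :
    lm ord p = (a : WithBot (σ →₀ ℕ)) ↔
      a ∈ p.support ∧ ∀ v ∈ p.support, ord.lo.le v a := by
  exact @finset_max_iff _ ord.lo p.support a

lemma exists_lm {σ : Type*} (ord : TermOrder σ) {p : MvPolynomial σ k} (hp : p ≠ 0) :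
    ∃ a : σ →₀ ℕ, lm ord p = (a : WithBot (σ →₀ ℕ)) := by
  let _ := ord.lo
  exact Finset.max_of_nonempty (support_nonempty.2 hp)

lemma ord_le_of_le {σ : Type*} (ord : TermOrder σ) {a b : σ →₀ ℕ} (h : a ≤ b) :
    ord.lo.le a b := by
  obtain ⟨c, rfl⟩ := exists_add_of_le h
  have := ord.add_le 0 c a (ord.zero_le c)
  rwa [zero_add, add_comm] at this

lemma ord_wf {σ : Type*} [Finite σ] (ord : TermOrder σ) : WellFounded ord.lo.lt := by
  have : IsWellFounded (σ →₀ ℕ) ord.lo.lt := by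
    refine ⟨?_⟩
    rw [RelEmbedding.wellFounded_iff_isEmpty]
    refine ⟨fun f => ?_⟩
    obtain ⟨i, j, hij, hle⟩ := wellQuasiOrdered_le (α := σ →₀ ℕ) (fun i => f i)
    have h1 : ord.lo.lt (f j) (f i) := f.map_rel_iff.2 hij
    have h2 := ord_le_of_le ord hle
    let _ := ord.lo
    exact absurd h1 (not_lt.2 h2)
  exact this.wf

lemma coeff_iny (p : MvPolynomial (Fin (n + 1)) k) (u : Fin (n + 1) →₀ ℕ) :
    coeff u (iny p) = if u (Fin.last n) = ydeg p then coeff u p else 0 := by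
  unfold iny
  rw [coeff_sum]
  simp only [coeff_monomial]
  rw [Finset.sum_ite_eq']
  split_ifs with h1 h2 h2
  · rfl
  · exact absurd (Finset.mem_filter.1 h1).2 h2
  · by_contra h3
    exact h1 (Finset.mem_filter.2 ⟨mem_support_iff.2 fun h => h3 h.symm, h2⟩)
  · rfl

lemma le_ydeg {p : MvPolynomial (Fin (n + 1)) k} {u : Fin (n + 1) →₀ ℕ} (hu : coeff u p ≠ 0) :
    u (Fin.last n) ≤ ydeg p :=
  Finset.le_sup (f := fun m : Fin (n + 1) →₀ ℕ => m (Fin.last n)) (mem_support_iff.2 hu)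

lemma lm_last (ord : TermOrder (Fin (n + 1)))
    (hord : ∀ p : MvPolynomial (Fin (n + 1)) k, lm ord p = lm ord (iny p))
    {p : MvPolynomial (Fin (n + 1)) k} {a : Fin (n + 1) →₀ ℕ}
    (h : lm ord p = (a : WithBot (Fin (n + 1) →₀ ℕ))) : a (Fin.last n) = ydeg p := by
  rw [hord, lm_coe_iff] at h
  have := mem_support_iff.1 h.1
  rw [coeff_iny] at this
  by_contra h2
  exact this (if_neg h2)

lemma last_mono (ord : TermOrder (Fin (n + 1)))
    (hord : ∀ p : MvPolynomial (Fin (n + 1)) k, lm ord p = lm ord (iny p))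
    {u v : Fin (n + 1) →₀ ℕ} (h : ord.lo.le u v) : u (Fin.last n) ≤ v (Fin.last n) := by
  by_cases huv : u = v
  · rw [huv]
  let p : MvPolynomial (Fin (n + 1)) k := monomial u 1 + monomial v 1
  have hv : coeff v p ≠ 0 := by simp [p, coeff_monomial, huv]
  have hu : coeff u p ≠ 0 := by simp [p, coeff_monomial, Ne.symm huv]
  have hl : lm ord p = (v : WithBot (Fin (n + 1) →₀ ℕ)) := by
    rw [lm_coe_iff]
    refine ⟨mem_support_iff.2 hv, fun w hw => ?_⟩
    by_cases h1 : w = u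
    · rw [h1]; exact h
    by_cases h2 : w = v
    · rw [h2]; exact ord.lo.le_refl v
    · exact absurd (mem_support_iff.1 hw)
        (by simp [p, coeff_monomial, Ne.symm h1, Ne.symm h2])
  rw [lm_last ord hord hl]
  exact le_ydeg hu

section GB

variable {m : ℕ} (ord : TermOrder (Fin (n + 1)))
    (I : Ideal (MvPolynomial (Fin (n + 1)) k))
    (d : Fin m → ℕ) (q r : Fin m → MvPolynomial (Fin (n + 1)) k)

lemma yv_pow (j : ℕ) : yv k n ^ j = monomial (Finsupp.single (Fin.last n) j) 1 := by
  rw [yv, X_pow_eq_monomial]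

lemma gen_facts {D : ℕ} {Q G : MvPolynomial (Fin (n + 1)) k} (h : iny G = yv k n ^ D * Q)
    (hQ : ¬ yv k n ∣ Q) : ydeg G = D ∧ Q ∈ yf k n 1 := by
  have h0 : yc 0 Q ≠ 0 := by
    intro h0
    have := yc_zero_add Q
    rw [h0, zero_add] at this
    exact hQ ⟨_, this⟩
  have hc : ∀ v, coeff v Q ≠ 0 → D + v (Fin.last n) = ydeg G := by
    intro v hv
    by_contra hne
    apply hv
    have h1 := congrArg (coeff (Finsupp.single (Fin.last n) D + v)) h
    rw [yv_pow, coeff_monomial_mul, one_mul, coeff_iny, if_neg (by simpa using hne)] at h1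
    exact h1.symm
  obtain ⟨u, hu⟩ := exists_coeff_ne_zero h0
  rw [coeff_yc] at hu
  have hu0 : u (Fin.last n) = 0 := by
    by_contra h1
    exact hu (if_neg h1)
  rw [if_pos hu0] at hu
  have hD := hc u hu
  refine ⟨by omega, fun v hv => ?_⟩
  by_contra hne
  have := hc v hne
  omega

lemma yc_ydeg (G : MvPolynomial (Fin (n + 1)) k) : yc (ydeg G) G = iny G := by
  ext u
  rw [coeff_yc, coeff_iny]

lemma mem_yf_ydeg (G : MvPolynomial (Fin (n + 1)) k) : G ∈ yf k n (ydeg G + 1) := by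
  intro u hu
  by_contra h
  have := le_ydeg h
  omega

/-- Claim 1: top `y`-components of elements of `I` lie in `I'`. -/
lemma claim1 (hord : ∀ p : MvPolynomial (Fin (n + 1)) k, lm ord p = lm ord (iny p))
    (hGB : IsGB ord I (fun i => yv k n ^ d i * q i + r i))
    (hiny : ∀ i, iny (yv k n ^ d i * q i + r i) = yv k n ^ d i * q i)
    (hq : ∀ i, ¬ yv k n ∣ q i) (j : ℕ) (f : MvPolynomial (Fin (n + 1)) k)
    (hf : f ∈ I) (hfj : f ∈ yf k n (j + 1)) :
    yc j f ∈ Ideal.span (Set.range fun i => yv k n ^ d i * q i) := by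
  have key : ∀ u : Fin (n + 1) →₀ ℕ, ∀ f ∈ I, f ∈ yf k n (j + 1) →
      lm ord f = (u : WithBot (Fin (n + 1) →₀ ℕ)) →
      yc j f ∈ Ideal.span (Set.range fun i => yv k n ^ d i * q i) := by
    intro u
    induction u using (ord_wf ord).induction with
    | _ u ih =>
    intro f hf hfj hu
    have hf0 : f ≠ 0 := by
      rintro rfl
      have := ((lm_coe_iff ord _ _).1 hu).1
      simp at this
    obtain ⟨i, a, b, ha, hab⟩ := hGB.2.2 f hf hf0
    set g := yv k n ^ d i * q i + r i with hg
    have hgI : g ∈ I := hGB.1 i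
    have hda : a (Fin.last n) = d i := by
      rw [lm_last ord hord ha]
      exact (gen_facts (hiny i) (hq i)).1
    have hyd : ydeg g = d i := (gen_facts (hiny i) (hq i)).1
    obtain rfl : u = a + b := WithBot.coe_injective (hu.symm.trans hab)
    rw [lm_coe_iff] at hu ha
    have hga : coeff a g ≠ 0 := mem_support_iff.1 ha.1
    have hfa : coeff (a + b) f ≠ 0 := mem_support_iff.1 hu.1
    have hjb : d i + b (Fin.last n) ≤ j := by
      by_contra hlt
      apply hfa
      apply hfj
      simp only [Finsupp.coe_add, Pi.add_apply]
      omega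
    set c : k := coeff (a + b) f / coeff a g with hc
    set h := f - monomial b c * g with hh
    have hfh : f = monomial b c * g + h := by rw [hh]; ring
    have hhI : h ∈ I := I.sub_mem hf (I.mul_mem_left _ hgI)
    have hsupp : ∀ v, coeff v h ≠ 0 → ord.lo.le v (a + b) ∧ v ≠ a + b := by
      intro v hv
      constructor
      · by_cases hvf : coeff v f = 0
        · rw [hh, coeff_sub, hvf, coeff_monomial_mul'] at hv
          split_ifs at hv with hbv
          · obtain ⟨w, rfl⟩ := exists_add_of_le hbv
            rw [add_tsub_cancel_left] at hv
            have hw : coeff w g ≠ 0 := by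
              intro h0
              rw [h0] at hv
              simp at hv
            have := ord.add_le w a b (ha.2 w (mem_support_iff.2 hw))
            rwa [add_comm w b] at this
          · simp at hv
        · exact hu.2 v (mem_support_iff.2 hvf)
      · rintro rfl
        apply hv
        rw [hh, coeff_sub, add_comm a b, coeff_monomial_mul, hc, add_comm a b,
          div_mul_cancel₀ _ hga, sub_self]
    have hhj : h ∈ yf k n (j + 1) := by
      refine Submodule.sub_mem _ hfj ?_
      refine yf_mono ?_ (monomial_mul_mem_yf b c (mem_yf_ydeg g))
      omega
    rw [hfh, map_add]
    refine Ideal.add_mem _ ?_ ?_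
    · rw [yc_monomial_mul, if_pos (by omega)]
      refine Ideal.mul_mem_left _ _ ?_
      by_cases hjd : j - b (Fin.last n) = d i
      · rw [hjd, ← hyd, yc_ydeg, hiny i]
        exact Ideal.subset_span ⟨i, rfl⟩
      · rw [yc_of_mem_yf (j := ydeg g + 1) (by omega) (mem_yf_ydeg g)]
        exact Ideal.zero_mem _
    · by_cases h0 : h = 0
      · rw [h0, map_zero]; exact Ideal.zero_mem _
      · obtain ⟨w, hw⟩ := exists_lm ord h0
        refine ih w ?_ h hhI hhj hw
        have hw' := hsupp w (mem_support_iff.1 ((lm_coe_iff ord _ _).1 hw).1)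
        exact (ord.lo.lt_iff_le_not_ge _ _).2
          ⟨hw'.1, fun hle => hw'.2 (ord.lo.le_antisymm _ _ hw'.1 hle)⟩
  by_cases h0 : f = 0
  · rw [h0, map_zero]; exact Ideal.zero_mem _
  · obtain ⟨w, hw⟩ := exists_lm ord h0
    exact key w f hf hfj hw

/-- Claim 2: `y`-components of elements of `I'` are top `y`-components of elements of `I`. -/
lemma claim2 (hg : ∀ i, yv k n ^ d i * q i + r i ∈ I)
    (hiny : ∀ i, iny (yv k n ^ d i * q i + r i) = yv k n ^ d i * q i)
    (hq : ∀ i, ¬ yv k n ∣ q i) (f : MvPolynomial (Fin (n + 1)) k)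
    (hf : f ∈ Ideal.span (Set.range fun i => yv k n ^ d i * q i)) :
    ∀ j, ∃ F ∈ I, F ∈ yf k n (j + 1) ∧ yc j F = yc j f := by
  induction hf using Submodule.span_induction with
  | mem x hx =>
    obtain ⟨i, rfl⟩ := hx
    intro j
    have hyd := (gen_facts (hiny i) (hq i)).1
    have hx : yv k n ^ d i * q i = yc (d i) (yv k n ^ d i * q i + r i) := by
      have := yc_ydeg (yv k n ^ d i * q i + r i)
      rw [hyd, hiny i] at this
      exact this.symm
    have hG := mem_yf_ydeg (yv k n ^ d i * q i + r i)
    rw [hyd] at hG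
    by_cases hj : j = d i
    · subst hj
      refine ⟨_, hg i, hG, ?_⟩
      exact (yc_yc _ _).symm.trans (congrArg _ hx.symm)
    · refine ⟨0, I.zero_mem, Submodule.zero_mem _, ?_⟩
      rw [map_zero]
      refine Eq.trans ?_ (congrArg _ hx.symm)
      ext u
      rw [coeff_yc, coeff_yc, coeff_zero]
      split_ifs <;> first | rfl | omega
  | zero => intro j; exact ⟨0, I.zero_mem, Submodule.zero_mem _, rfl⟩
  | add x y _ _ hx hy =>
    intro j
    obtain ⟨F, h1, h2, h3⟩ := hx j
    obtain ⟨G, h4, h5, h6⟩ := hy j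
    exact ⟨F + G, I.add_mem h1 h4, Submodule.add_mem _ h2 h5, by rw [map_add, map_add, h3, h6]⟩
  | smul a x _ hx =>
    induction a using MvPolynomial.induction_on' with
    | monomial b c =>
      intro j
      rw [smul_eq_mul, yc_monomial_mul]
      split_ifs with hb
      · obtain ⟨F, h1, h2, h3⟩ := hx (j - b (Fin.last n))
        refine ⟨monomial b c * F, I.mul_mem_left _ h1,
          yf_mono (by omega) (monomial_mul_mem_yf b c h2), ?_⟩
        rw [yc_monomial_mul, if_pos hb, h3]
      · exact ⟨0, I.zero_mem, Submodule.zero_mem _, by simp⟩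
    | add p q hp hq =>
      intro j
      obtain ⟨F, h1, h2, h3⟩ := hp j
      obtain ⟨G, h4, h5, h6⟩ := hq j
      exact ⟨F + G, I.add_mem h1 h4, Submodule.add_mem _ h2 h5,
        by rw [map_add, add_smul, map_add, h3, h6]⟩

end GB

end helpers

/-- With `{y^{d i} * q i + r i}` a Gröbner basis of a homogeneous ideal `I` as
before, the Hilbert series satisfy `h_{R/I}(s) ≥ h_{R/P}(s) + s·h_{R/C}(s)`
coefficientwise, with equality if and only if `I' = C ∩ P`. -/
theorem stmt_3 {k : Type*} [Field k] {n m : ℕ}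
    (ord : TermOrder (Fin (n + 1)))
    (hord : ∀ p : MvPolynomial (Fin (n + 1)) k, lm ord p = lm ord (iny p))
    (I : Ideal (MvPolynomial (Fin (n + 1)) k))
    (hI : ∀ f ∈ I, ∀ e : ℕ, MvPolynomial.homogeneousComponent e f ∈ I)
    (d : Fin m → ℕ) (q r : Fin m → MvPolynomial (Fin (n + 1)) k)
    (hGB : IsGB ord I (fun i => yv k n ^ d i * q i + r i))
    (hiny : ∀ i, iny (yv k n ^ d i * q i + r i) = yv k n ^ d i * q i)
    (hq : ∀ i, ¬ yv k n ∣ q i) :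
    (∀ e : ℕ,
      hilb (Ideal.span (q '' {i | d i = 0}) + Ideal.span {yv k n}) e +
          (if e = 0 then 0 else hilb (Ideal.span (Set.range q)) (e - 1)) ≤
        hilb I e) ∧
    ((∀ e : ℕ,
        hilb I e =
          hilb (Ideal.span (q '' {i | d i = 0}) + Ideal.span {yv k n}) e +
            (if e = 0 then 0 else hilb (Ideal.span (Set.range q)) (e - 1))) ↔
      Ideal.span (Set.range fun i => yv k n ^ d i * q i) =
        Ideal.span (Set.range q) ⊓
          (Ideal.span (q '' {i | d i = 0}) + Ideal.span {yv k n})) := by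
  have hyf : ∀ i, q i ∈ yf k n 1 := fun i => (gen_facts (hiny i) (hq i)).2
  have hT : ∀ s ∈ Set.range q, s ∈ yf k n 1 := by
    rintro _ ⟨i, rfl⟩
    exact hyf i
  have hST : q '' {i | d i = 0} ⊆ Set.range q := Set.image_subset_range _ _
  have hS : ∀ s ∈ q '' {i | d i = 0}, s ∈ yf k n 1 := fun s hs => hT s (hST hs)
  have hinf := hilb_inf hST hT
  have c1 := claim1 ord I d q r hord hGB hiny hq
  have c2 := claim2 I d q r hGB.1 hiny hq
  set I' := Ideal.span (Set.range fun i => yv k n ^ d i * q i) with hI'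
  set C := Ideal.span (Set.range q) with hC
  set A := Ideal.span (q '' {i | d i = 0}) with hA
  set P := A + Ideal.span {yv k n} with hP
  have hdim : ∀ e, Module.finrank k (dp I e) = Module.finrank k (dp I' e) := by
    intro e
    apply finrank_eq_of_yc
    intro j
    apply le_antisymm
    · rintro _ ⟨f, ⟨hf, hfj⟩, rfl⟩
      have hf := mem_dp.1 hf
      exact ⟨yc j f, ⟨mem_dp.2 ⟨isHom_yc hf.1 j, c1 j f hf.2 hfj⟩, yc_mem_yf j f⟩, yc_yc j f⟩
    · rintro _ ⟨f, ⟨hf, hfj⟩, rfl⟩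
      have hf := mem_dp.1 hf
      obtain ⟨F, h1, h2, h3⟩ := c2 f hf.2 j
      refine ⟨homogeneousComponent e F, ⟨mem_dp.2 ⟨homogeneousComponent_isHomogeneous _ _,
        hI F h1 e⟩, homogeneousComponent_mem_yf _ _ _ h2⟩, ?_⟩
      rw [yc_homogeneousComponent, h3, ← yc_homogeneousComponent, isHom_iff.1 hf.1]
  have hhilb : ∀ e, hilb I e = hilb I' e := by
    intro e
    have h1 := hilb_add I e
    have h2 := hilb_add I' e
    have h3 := hdim e
    omega
  have homI' : ∀ f ∈ I', ∀ e, homogeneousComponent e f ∈ I' := by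
    intro f hf e
    apply mem_of_yc
    intro j
    obtain ⟨F, h1, h2, h3⟩ := c2 f hf j
    rw [yc_homogeneousComponent, ← h3, ← yc_homogeneousComponent]
    exact c1 j _ (hI F h1 e) (homogeneousComponent_mem_yf _ _ _ h2)
  have hI'C : I' ≤ C := by
    rw [hI', Ideal.span_le]
    rintro _ ⟨i, rfl⟩
    exact Ideal.mul_mem_left _ _ (Ideal.subset_span ⟨i, rfl⟩)
  have hI'A : ∀ f ∈ I', yc 0 f ∈ A := by
    intro f hf
    refine yc_mem_of_gens _ A 0 ?_ f hf 0 le_rfl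
    rintro _ ⟨i, rfl⟩ l hl
    obtain rfl : l = 0 := by omega
    dsimp only
    by_cases hd : d i = 0
    · rw [hd, pow_zero, one_mul, yc_eq_self_of (hyf i)]
      exact Ideal.subset_span ⟨i, hd, rfl⟩
    · obtain ⟨t, ht⟩ := Nat.exists_eq_succ_of_ne_zero hd
      rw [ht, pow_succ', mul_assoc, yc_zero_yv_mul]
      exact Ideal.zero_mem _
  have hAI' : A ≤ I' := by
    rw [hA, Ideal.span_le]
    rintro _ ⟨i, hi, rfl⟩
    refine Ideal.subset_span ⟨i, ?_⟩
    have hi : d i = 0 := hi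
    simp [hi]
  have hle : I' ≤ C ⊓ P := fun f hf => ⟨hI'C hf, (mem_P_iff hS).2 (hI'A f hf)⟩
  have homC : ∀ f ∈ C, ∀ e, homogeneousComponent e f ∈ C := by
    intro f hf e
    let N := Finset.univ.sup d
    have h1 : yv k n ^ N * f ∈ I' := by
      have : C ≤ Submodule.comap (LinearMap.mulLeft (MvPolynomial (Fin (n + 1)) k)
          (yv k n ^ N)) I' := by
        rw [hC, Ideal.span, Submodule.span_le]
        rintro _ ⟨i, rfl⟩
        have hdN : d i ≤ N := Finset.le_sup (Finset.mem_univ i)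
        show yv k n ^ N * q i ∈ I'
        rw [← Nat.sub_add_cancel hdN, pow_add, mul_assoc]
        exact Ideal.mul_mem_left _ _ (Ideal.subset_span ⟨i, rfl⟩)
      exact this hf
    have h2 : ∀ t, homogeneousComponent (e + t) (yv k n ^ t * f) =
        yv k n ^ t * homogeneousComponent e f := by
      intro t
      induction t with
      | zero => simp
      | succ t ih =>
        rw [pow_succ', mul_assoc, ← add_assoc, homogeneousComponent_yv_mul, ih, mul_assoc]
    have h3 : ∀ t (g : MvPolynomial (Fin (n + 1)) k), yv k n ^ t * g ∈ C → g ∈ C := by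
      intro t g
      induction t with
      | zero => simp
      | succ t ih =>
        rw [pow_succ', mul_assoc]
        intro h
        exact ih (mem_of_yv_mul_mem hT h)
    apply h3 N
    rw [← h2]
    exact hI'C (homI' _ h1 _)
  have homP : ∀ f ∈ P, ∀ e, homogeneousComponent e f ∈ P := by
    intro f hf e
    rw [hP, mem_P_iff hS] at hf ⊢
    rw [yc_homogeneousComponent]
    have := hI'A _ (homI' _ (hAI' hf) e)
    rwa [← yc_homogeneousComponent, yc_yc, yc_homogeneousComponent] at this
  have hdple : ∀ e, dp I' e ≤ dp (C ⊓ P) e := fun e f hf =>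
    mem_dp.2 ⟨(mem_dp.1 hf).1, hle (mem_dp.1 hf).2⟩
  refine ⟨?_, ?_, ?_⟩
  · intro e
    rw [← hinf e, hhilb e]
    have h1 := hilb_add I' e
    have h2 := hilb_add (C ⊓ P) e
    have h3 := Submodule.finrank_mono (hdple e)
    omega
  · intro heq
    refine le_antisymm hle ?_
    intro f hf
    have hdp : ∀ e, dp I' e = dp (C ⊓ P) e := by
      intro e
      apply Submodule.eq_of_le_of_finrank_eq (hdple e)
      have h0 := heq e
      rw [← hinf e, hhilb e] at h0
      have h1 := hilb_add I' e
      have h2 := hilb_add (C ⊓ P) e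
      omega
    rw [← sum_homogeneousComponent f]
    refine Ideal.sum_mem _ fun e _ => ?_
    have : homogeneousComponent e f ∈ dp (C ⊓ P) e :=
      mem_dp.2 ⟨homogeneousComponent_isHomogeneous _ _, homC f hf.1 e, homP f hf.2 e⟩
    rw [← hdp e] at this
    exact (mem_dp.1 this).2
  · intro heq e
    rw [← hinf e, hhilb e, heq]
end
end

section
/- Let π ∈ S_n be vexillary with largest descent position k. Then the Grassmannian permutation π̃ (the unique Grassmannian permutation with descent at k obtained by the chain construction) satisfies Ess(π̃) = {(k, k − p + q) : (p,q) ∈ Ess(π)} and r_{π̃}(k, k − p + q) = k − p + r_π(p,q) for each (p,q) ∈ Ess(π). -/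
open Equiv Finset

/-- `(p,q)` (0-indexed) is a box of the diagram `D(π)`:
`π(p) > q` and `π⁻¹(q) > p`. -/
def InDiag {n : ℕ} (π : Equiv.Perm (Fin n)) (p q : ℕ) : Prop :=
  ∃ (hp : p < n) (hq : q < n),
    q < (π ⟨p, hp⟩ : ℕ) ∧ p < (π.symm ⟨q, hq⟩ : ℕ)

/-- `(p,q)` is in the essential set `Ess(π)`: a southeast corner of `D(π)`. -/
def InEss {n : ℕ} (π : Equiv.Perm (Fin n)) (p q : ℕ) : Prop :=
  InDiag π p q ∧ ¬ InDiag π (p + 1) q ∧ ¬ InDiag π p (q + 1)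

/-- The rank function `r(p,q) = #{i ≤ p : π(i) ≤ q}` (0-indexed). -/
def rk {n : ℕ} (π : Equiv.Perm (Fin n)) (p q : ℕ) : ℕ :=
  (Finset.univ.filter (fun i : Fin n => (i : ℕ) ≤ p ∧ (π i : ℕ) ≤ q)).card

/-- The dots of `π` strictly northwest of `(i,j)` form a diagonal: any two of them
are ordered strictly northwest-to-southeast. -/
def Diagonalizes {n : ℕ} (π : Equiv.Perm (Fin n)) (i j : ℕ) : Prop :=
  ∀ a b : Fin n, (a : ℕ) < i → (π a : ℕ) < j → (b : ℕ) < i → (π b : ℕ) < j →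
    a < b → π a < π b

/-- `π` is vexillary, i.e. 2143-avoiding. -/
def Vexillary {n : ℕ} (π : Equiv.Perm (Fin n)) : Prop :=
  ¬ ∃ a b c d : Fin n, a < b ∧ b < c ∧ c < d ∧
    π b < π a ∧ π a < π d ∧ π d < π c

/-- `(p,q) ∈ D(π)` is accessible: `r(p,q) ≠ 0` and no box of `D(π)` other than
`(p,q)` itself lies weakly southeast of `(p,q)`. -/
def Accessible {n : ℕ} (π : Equiv.Perm (Fin n)) (p q : Fin n) : Prop :=
  InDiag π p q ∧ rk π p q ≠ 0 ∧
    ∀ i j : ℕ, InDiag π i j → (p : ℕ) ≤ i → (q : ℕ) ≤ j → i = (p : ℕ) ∧ j = (q : ℕ)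

/-- `π` has a descent at (0-indexed) position `m`: `π(m) > π(m+1)`. -/
def Des {n : ℕ} (π : Equiv.Perm (Fin n)) (m : ℕ) : Prop :=
  ∃ h : m + 1 < n, (π ⟨m + 1, h⟩ : ℕ) < (π ⟨m, Nat.lt_of_succ_lt h⟩ : ℕ)

lemma ess_facts {n : ℕ} (π : Equiv.Perm (Fin n)) {p q : ℕ} (h : InEss π p q) :
    ∃ (hp : p + 1 < n) (hq : q + 1 < n),
      q < (π ⟨p, by omega⟩ : ℕ) ∧ (π ⟨p + 1, hp⟩ : ℕ) ≤ q ∧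
      p < (π.symm ⟨q, by omega⟩ : ℕ) ∧ (π.symm ⟨q + 1, hq⟩ : ℕ) ≤ p := by
  obtain ⟨⟨hp, hq, h1, h2⟩, h3, h4⟩ := h
  have hp' : p + 1 < n := by have := (π.symm ⟨q, hq⟩).2; omega
  have hq' : q + 1 < n := by have := (π ⟨p, hp⟩).2; omega
  refine ⟨hp', hq', h1, ?_, h2, ?_⟩
  · by_contra hc
    apply h3
    refine ⟨hp', hq, by omega, ?_⟩
    rcases Nat.lt_or_ge (p + 1) (π.symm ⟨q, hq⟩ : ℕ) with h | h
    · exact h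
    · exfalso
      have e : π.symm ⟨q, hq⟩ = ⟨p + 1, hp'⟩ := Fin.ext (by simp; omega)
      rw [Equiv.symm_apply_eq] at e
      rw [← e] at hc
      simp at hc
  · by_contra hc
    apply h4
    refine ⟨hp, hq', ?_, by omega⟩
    rcases Nat.lt_or_ge (q + 1) (π ⟨p, hp⟩ : ℕ) with h | h
    · exact h
    · exfalso
      have e : π ⟨p, hp⟩ = ⟨q + 1, hq'⟩ := Fin.ext (by simp; omega)
      rw [← Equiv.eq_symm_apply] at e
      rw [← e] at hc
      simp at hc

lemma ess_des {n : ℕ} (π : Equiv.Perm (Fin n)) {p q : ℕ} (h : InEss π p q) : Des π p := by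
  obtain ⟨hp, hq, h1, h2, h3, h4⟩ := ess_facts π h
  exact ⟨hp, by omega⟩

lemma ess_not_nw {n : ℕ} (π : Equiv.Perm (Fin n)) (hvex : Vexillary π) {p q p' q' : ℕ}
    (h : InEss π p q) (h' : InEss π p' q') (hpp : p < p') (hqq : q < q') : False := by
  obtain ⟨hp, hq, h1, h2, h3, h4⟩ := ess_facts π h
  obtain ⟨hp', hq', h1', h2', h3', h4'⟩ := ess_facts π h'
  have a1 : p + 1 ≠ p' := by rintro rfl; omega
  have a2 : q + 1 ≠ q' := by rintro rfl; omega
  apply hvex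
  refine ⟨π.symm ⟨q + 1, hq⟩, ⟨p + 1, hp⟩, ⟨p', by omega⟩, π.symm ⟨q', by omega⟩, ?_, ?_, ?_,
    ?_, ?_, ?_⟩ <;> simp only [Fin.lt_def, Equiv.apply_symm_apply] <;> omega

noncomputable def cntU {n : ℕ} (π : Equiv.Perm (Fin n)) (p q : ℕ) : ℕ :=
  (Finset.univ.filter (fun i : Fin n => (i : ℕ) ≤ p ∧ q < (π i : ℕ))).card

noncomputable def cntV {n : ℕ} (π : Equiv.Perm (Fin n)) (p q : ℕ) : ℕ :=
  (Finset.univ.filter (fun i : Fin n => p < (i : ℕ) ∧ (π i : ℕ) ≤ q)).card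

lemma card_fin_le {n p : ℕ} (hp : p < n) :
    (Finset.univ.filter (fun i : Fin n => (i : ℕ) ≤ p)).card = p + 1 := by
  have : (Finset.univ.filter (fun i : Fin n => (i : ℕ) ≤ p)) = Finset.Iic ⟨p, hp⟩ := by
    ext i; simp [Fin.le_def]
  rw [this]; simp

lemma rk_add_cntU {n : ℕ} (π : Equiv.Perm (Fin n)) {p : ℕ} (q : ℕ) (hp : p < n) :
    rk π p q + cntU π p q = p + 1 := by
  rw [← card_fin_le hp, rk, cntU,
    ← Finset.card_filter_add_card_filter_not (s := Finset.univ.filter (fun i : Fin n => (i : ℕ) ≤ p))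
      (fun i => (π i : ℕ) ≤ q)]
  simp [Finset.filter_filter]

lemma rk_add_cntV {n : ℕ} (π : Equiv.Perm (Fin n)) (p : ℕ) {q : ℕ} (hq : q < n) :
    rk π p q + cntV π p q = q + 1 := by
  have h : (Finset.univ.filter (fun i : Fin n => (π i : ℕ) ≤ q)).card = q + 1 := by
    rw [← card_fin_le hq]
    exact Finset.card_equiv π (by simp)
  rw [← h, rk, cntV,
    ← Finset.card_filter_add_card_filter_not
      (s := Finset.univ.filter (fun i : Fin n => (π i : ℕ) ≤ q)) (fun i => (i : ℕ) ≤ p)]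
  simp [Finset.filter_filter, and_comm]

lemma cntU_pos {n : ℕ} (π : Equiv.Perm (Fin n)) {p q : ℕ} (h : InEss π p q) :
    0 < cntU π p q := by
  obtain ⟨hp, hq, h1, h2, h3, h4⟩ := ess_facts π h
  exact Finset.card_pos.2 ⟨⟨p, by omega⟩, by simp [h1]⟩

lemma cntV_pos {n : ℕ} (π : Equiv.Perm (Fin n)) {p q : ℕ} (h : InEss π p q) :
    0 < cntV π p q := by
  obtain ⟨hp, hq, h1, h2, h3, h4⟩ := ess_facts π h
  exact Finset.card_pos.2 ⟨π.symm ⟨q, by omega⟩, by simp [h3]⟩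

lemma chain_lt {n : ℕ} (π : Equiv.Perm (Fin n)) {p q p' q' : ℕ}
    (h : InEss π p q) (h' : InEss π p' q') (hpp : p' ≤ p) (hqq : q ≤ q')
    (hne : ¬ (p = p' ∧ q = q')) : cntU π p' q' < cntU π p q ∧ cntV π p q < cntV π p' q' := by
  obtain ⟨hp, hq, h1, h2, h3, h4⟩ := ess_facts π h
  obtain ⟨hp', hq', h1', h2', h3', h4'⟩ := ess_facts π h'
  constructor
  · apply Finset.card_lt_card
    refine (Finset.ssubset_iff_of_subset ?_).2 ?_
    · intro i; simp only [Finset.mem_filter, Finset.mem_univ, true_and]; omega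
    · rcases Nat.lt_or_ge p' p with hl | hl
      · refine ⟨⟨p, by omega⟩, ?_, ?_⟩ <;>
          simp only [Finset.mem_filter, Finset.mem_univ, true_and] <;> omega
      · refine ⟨π.symm ⟨q + 1, hq⟩, ?_, ?_⟩ <;>
          simp only [Finset.mem_filter, Finset.mem_univ, true_and, Equiv.apply_symm_apply] <;> omega
  · apply Finset.card_lt_card
    refine (Finset.ssubset_iff_of_subset ?_).2 ?_
    · intro i; simp only [Finset.mem_filter, Finset.mem_univ, true_and]; omega
    · rcases Nat.lt_or_ge q q' with hl | hl
      · refine ⟨π.symm ⟨q', by omega⟩, ?_, ?_⟩ <;>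
          simp only [Finset.mem_filter, Finset.mem_univ, true_and, Equiv.apply_symm_apply] <;> omega
      · refine ⟨⟨p' + 1, hp'⟩, ?_, ?_⟩ <;>
          simp only [Finset.mem_filter, Finset.mem_univ, true_and] <;> omega

lemma chain_cmp {n : ℕ} (π : Equiv.Perm (Fin n)) (hvex : Vexillary π) {p q p' q' : ℕ}
    (h : InEss π p q) (h' : InEss π p' q') :
    (p = p' ∧ q = q') ∨ (cntU π p' q' < cntU π p q ∧ cntV π p q < cntV π p' q') ∨
      (cntU π p q < cntU π p' q' ∧ cntV π p' q' < cntV π p q) := by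
  by_cases e : p = p' ∧ q = q'
  · exact Or.inl e
  have n1 := fun a b => ess_not_nw π hvex h h' a b
  have n2 := fun a b => ess_not_nw π hvex h' h a b
  by_cases c : p' ≤ p ∧ q ≤ q'
  · exact Or.inr (Or.inl (chain_lt π h h' c.1 c.2 e))
  · refine Or.inr (Or.inr (chain_lt π h' h ?_ ?_ (by omega)))
    · by_contra hc
      exact c ⟨by omega, by by_contra hd; exact n2 (by omega) (by omega)⟩
    · by_contra hc
      exact c ⟨by by_contra hd; exact n1 (by omega) (by omega), by omega⟩

lemma exists_ess {n : ℕ} (π : Equiv.Perm (Fin n)) {k : ℕ} (hk : Des π k) :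
    ∃ q, InEss π k q := by
  classical
  obtain ⟨h, hd⟩ := hk
  set q0 := (π ⟨k + 1, h⟩ : ℕ) with hq0
  have hD : InDiag π k q0 := ⟨by omega, (π ⟨k + 1, h⟩).2, hd, by simp [hq0]⟩
  have hb : ∀ q, InDiag π k q → q ≤ n := by rintro q ⟨_, hq, _⟩; omega
  have hq0n := hb _ hD
  refine ⟨Nat.findGreatest (InDiag π k) n, Nat.findGreatest_spec hq0n hD, ?_, ?_⟩
  · have := Nat.le_findGreatest hq0n hD
    rintro ⟨_, _, h1, _⟩
    omega
  · intro hc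
    have := Nat.le_findGreatest (hb _ hc) hc
    omega

/-- Grassmannian permutation attached to a set. -/
lemma exists_grass (k M : ℕ) (A : Finset (Fin (k + 1 + M))) (hA : A.card = k + 1) :
    ∃ w : Equiv.Perm (Fin (k + 1 + M)), (∀ i, w i ∈ A ↔ (i : ℕ) ≤ k) ∧
      (∀ i j : Fin (k + 1 + M), i < j → (j : ℕ) ≤ k → w i < w j) ∧
      (∀ i j : Fin (k + 1 + M), i < j → k < (i : ℕ) → w i < w j) := by
  have hAc : Aᶜ.card = M := by rw [Finset.card_compl, hA]; simp
  set w : Equiv.Perm (Fin (k + 1 + M)) :=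
    finSumFinEquiv.symm.trans (finSumEquivOfFinset hA hAc) with hw
  have w1 : ∀ i : Fin (k + 1), w (Fin.castAdd M i) = A.orderEmbOfFin hA i := by
    intro i; simp [hw]
  have w2 : ∀ i : Fin M, w (Fin.natAdd (k + 1) i) = Aᶜ.orderEmbOfFin hAc i := by
    intro i; simp [hw]
  refine ⟨w, ?_, ?_, ?_⟩
  · intro i
    refine Fin.addCases (fun i => ?_) (fun i => ?_) i
    · rw [w1]; simp only [Finset.orderEmbOfFin_mem, Fin.val_castAdd, true_iff]; omega
    · rw [w2]
      have := Finset.orderEmbOfFin_mem Aᶜ hAc i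
      rw [Finset.mem_compl] at this
      simp only [this, Fin.val_natAdd, false_iff]; omega
  · intro i j hij hj
    have hi : (i : ℕ) ≤ k := by rw [Fin.lt_def] at hij; omega
    have e1 : i = Fin.castAdd M ⟨i, by omega⟩ := rfl
    have e2 : j = Fin.castAdd M ⟨j, by omega⟩ := rfl
    rw [e1, e2, w1, w1]
    exact (A.orderEmbOfFin hA).strictMono hij
  · intro i j hij hi
    have hij' : (i : ℕ) < j := hij
    have e1 : i = Fin.natAdd (k + 1) ⟨i - (k + 1), by omega⟩ := Fin.ext (by simp; omega)
    have e2 : j = Fin.natAdd (k + 1) ⟨j - (k + 1), by omega⟩ := Fin.ext (by simp; omega)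
    rw [e1, e2, w2, w2]
    refine (Aᶜ.orderEmbOfFin hAc).strictMono ?_
    rw [Fin.lt_def]; simp only; omega

/-- Number of gaps before the `a`-th element. -/
def gapF (E : Finset (ℕ × ℕ)) (a : ℕ) : ℕ := (E.filter (fun e => e.1 ≤ a)).sup Prod.snd

lemma gapF_mono (E : Finset (ℕ × ℕ)) : Monotone (gapF E) := by
  intro a b h
  apply Finset.sup_mono
  intro e; simp only [Finset.mem_filter]; rintro ⟨h1, h2⟩; exact ⟨h1, by omega⟩

lemma xs_strict (E : Finset (ℕ × ℕ)) : StrictMono (fun a => a + gapF E a) := by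
  intro a b h
  have := gapF_mono E h.le
  simp only; omega

lemma xs_at (E : Finset (ℕ × ℕ))
    (hc : ∀ e ∈ E, ∀ f ∈ E, e = f ∨ (e.1 < f.1 ∧ e.2 < f.2) ∨ (f.1 < e.1 ∧ f.2 < e.2))
    {e : ℕ × ℕ} (he : e ∈ E) : gapF E e.1 = e.2 := by
  apply le_antisymm
  · apply Finset.sup_le
    intro f hf
    rw [Finset.mem_filter] at hf
    rcases hc e he f hf.1 with h | h | h
    · rw [h]
    · omega
    · exact h.2.le
  · exact Finset.le_sup (f := Prod.snd) (Finset.mem_filter.2 ⟨he, le_rfl⟩)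

lemma xs_below (E : Finset (ℕ × ℕ)) (hpos : ∀ e ∈ E, 0 < e.2)
    (hc : ∀ e ∈ E, ∀ f ∈ E, e = f ∨ (e.1 < f.1 ∧ e.2 < f.2) ∨ (f.1 < e.1 ∧ f.2 < e.2))
    {e : ℕ × ℕ} (he : e ∈ E) {a : ℕ} (ha : a < e.1) : gapF E a < e.2 := by
  refine (Finset.sup_lt_iff (by simpa using hpos e he)).2 ?_
  intro f hf
  rw [Finset.mem_filter] at hf
  rcases hc e he f hf.1 with h | h | h
  · subst h; omega
  · omega
  · exact h.2

lemma xs_corner (E : Finset (ℕ × ℕ)) {a j : ℕ} (hj : a + gapF E a = j + 1)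
    (hn : ∀ b, b < a → b + gapF E b ≠ j) : ∃ e ∈ E, j + 1 = e.1 + e.2 := by
  have hne : (E.filter (fun e => e.1 ≤ a)).Nonempty := by
    rw [Finset.nonempty_iff_ne_empty]
    intro h0
    have h1 : gapF E a = 0 := by rw [gapF, h0]; rfl
    have h2 := gapF_mono E (Nat.sub_le a 1)
    exact hn (a - 1) (by omega) (by omega)
  obtain ⟨e, he, hs⟩ := Finset.exists_mem_eq_sup _ hne Prod.snd
  rw [Finset.mem_filter] at he
  change gapF E a = e.2 at hs
  refine ⟨e, he.1, ?_⟩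
  rcases Nat.lt_or_ge e.1 a with h | h
  · exfalso
    have h1 : e.2 ≤ gapF E (a - 1) :=
      Finset.le_sup (f := Prod.snd) (Finset.mem_filter.2 ⟨he.1, by omega⟩)
    have h2 := gapF_mono E (Nat.sub_le a 1)
    exact hn (a - 1) (by omega) (by omega)
  · omega

lemma grass_of_chain (k M : ℕ) (E : Finset (ℕ × ℕ)) (hE : E.Nonempty)
    (hk : ∀ e ∈ E, e.1 ≤ k) (hM : ∀ e ∈ E, e.2 ≤ M) (hpos : ∀ e ∈ E, 0 < e.2)
    (hc : ∀ e ∈ E, ∀ f ∈ E, e = f ∨ (e.1 < f.1 ∧ e.2 < f.2) ∨ (f.1 < e.1 ∧ f.2 < e.2)) :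
    ∃ w : Equiv.Perm (Fin (k + 1 + M)), (∀ m, Des w m ↔ m = k) ∧
      (∀ i j, InEss w i j ↔ i = k ∧ ∃ e ∈ E, j + 1 = e.1 + e.2) ∧
      (∀ e ∈ E, ∀ j, j + 1 = e.1 + e.2 → rk w k j = e.1) := by
  classical
  have hG : ∀ a, gapF E a ≤ M := fun a => Finset.sup_le fun e he => hM e (Finset.mem_filter.1 he).1
  let x : Fin (k + 1) → Fin (k + 1 + M) := fun a =>
    ⟨a + gapF E a, by have := hG a; omega⟩
  have hxinj : Function.Injective x := by
    intro a b h
    exact Fin.ext ((xs_strict E).injective (Fin.mk.inj_iff.1 h))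
  set A : Finset (Fin (k + 1 + M)) := Finset.univ.image x with hAdef
  have hA : A.card = k + 1 := by rw [hAdef, Finset.card_image_of_injective _ hxinj]; simp
  have memA : ∀ y : Fin (k + 1 + M), y ∈ A ↔ ∃ a, a ≤ k ∧ a + gapF E a = y := by
    intro y
    rw [hAdef, Finset.mem_image]
    constructor
    · rintro ⟨a, _, rfl⟩; exact ⟨a, by omega, rfl⟩
    · rintro ⟨a, h, h'⟩; exact ⟨⟨a, by omega⟩, Finset.mem_univ _, Fin.ext h'⟩
  obtain ⟨w, hwA, hlo, hhi⟩ := exists_grass k M A hA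
  have hwA' : ∀ y, (w.symm y : ℕ) ≤ k ↔ y ∈ A := fun y => by rw [← hwA]; simp
  have desk : ∀ m, Des w m → m = k := by
    rintro m ⟨h, hd⟩
    rcases Nat.lt_trichotomy m k with h1 | h1 | h1
    · have := hlo ⟨m, by omega⟩ ⟨m + 1, h⟩ (by simp [Fin.lt_def]) (by simp only; omega)
      rw [Fin.lt_def] at this; omega
    · exact h1
    · have := hhi ⟨m, by omega⟩ ⟨m + 1, h⟩ (by simp [Fin.lt_def]) (by simp only; omega)
      rw [Fin.lt_def] at this; omega
  have lem : ∀ e ∈ E, ∀ j, j + 1 = e.1 + e.2 → ∀ a, (a + gapF E a ≤ j ↔ a < e.1) ∧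
      a + gapF E a ≠ j := by
    intro e he j hj a
    have h1 := xs_at E hc he
    rcases Nat.lt_or_ge a e.1 with h | h
    · have := xs_below E hpos hc he h
      omega
    · have := gapF_mono E h
      omega
  have ess : ∀ i j, InEss w i j ↔ i = k ∧ ∃ e ∈ E, j + 1 = e.1 + e.2 := by
    intro i j
    constructor
    · intro h
      obtain rfl := desk i (ess_des w h)
      refine ⟨rfl, ?_⟩
      obtain ⟨hp, hq, h1, h2, h3, h4⟩ := ess_facts w h
      rw [hwA', memA] at h4
      obtain ⟨a, ha, hx⟩ := h4
      refine xs_corner E hx ?_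
      intro b hb hbj
      have : (⟨j, by omega⟩ : Fin (i + 1 + M)) ∈ A := (memA _).2 ⟨b, by omega, hbj⟩
      rw [← hwA'] at this
      omega
    · rintro ⟨rfl, e, he, hj⟩
      have hei := hk e he
      have heM := hM e he
      have hj1 : j + 1 < i + 1 + M := by omega
      have hMp := hpos e he
      have m1 : (⟨j + 1, hj1⟩ : Fin (i + 1 + M)) ∈ A :=
        (memA _).2 ⟨e.1, hei, by rw [xs_at E hc he]; exact hj.symm⟩
      have m0 : (⟨j, by omega⟩ : Fin (i + 1 + M)) ∉ A := by
        rw [memA]; rintro ⟨a, _, h⟩; exact (lem e he j hj a).2 h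
      rw [← hwA'] at m0 m1
      push Not at m0
      have hi1 : i + 1 < i + 1 + M := by omega
      refine ⟨⟨by omega, by omega, ?_, m0⟩, ?_, ?_⟩
      · have : (⟨j + 1, hj1⟩ : Fin (i + 1 + M)) ≤ w ⟨i, by omega⟩ := by
          rcases Nat.lt_or_ge (w.symm ⟨j + 1, hj1⟩ : ℕ) i with h | h
          · have := hlo (w.symm ⟨j + 1, hj1⟩) ⟨i, by omega⟩ h le_rfl
            rw [Equiv.apply_symm_apply] at this
            exact this.le
          · have : w.symm ⟨j + 1, hj1⟩ = ⟨i, by omega⟩ := Fin.ext (by simp only; omega)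
            rw [← this]; simp
        rw [Fin.le_def] at this; simp only at this; omega
      · rintro ⟨_, hq, h1, h2⟩
        have := hhi ⟨i + 1, hi1⟩ (w.symm ⟨j, hq⟩) h2 (by simp)
        rw [Equiv.apply_symm_apply, Fin.lt_def] at this
        simp only at this
        omega
      · rintro ⟨_, _, _, h2⟩
        omega
  refine ⟨w, fun m => ⟨desk m, ?_⟩, ess, ?_⟩
  · rintro rfl
    obtain ⟨e, he⟩ := hE
    have := hpos e he
    exact ess_des w ((ess m (e.1 + e.2 - 1)).2 ⟨rfl, e, he, by omega⟩)
  · intro e he j hj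
    have hek := hk e he
    have c1 : rk w k j = (A.filter (fun y : Fin (k + 1 + M) => (y : ℕ) ≤ j)).card := by
      rw [rk]
      refine Finset.card_equiv w ?_
      intro i
      simp [hwA]
    have c2 : A.filter (fun y : Fin (k + 1 + M) => (y : ℕ) ≤ j) =
        (Finset.univ.filter (fun a : Fin (k + 1) => (a : ℕ) < e.1)).image x := by
      ext y
      simp only [hAdef, Finset.mem_filter, Finset.mem_image, Finset.mem_univ, true_and]
      constructor
      · rintro ⟨⟨a, rfl⟩, h⟩
        exact ⟨a, (lem e he j hj a).1.1 h, rfl⟩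
      · rintro ⟨a, h, rfl⟩
        exact ⟨⟨a, rfl⟩, (lem e he j hj a).1.2 h⟩
    rw [c1, c2, Finset.card_image_of_injective _ hxinj]
    have c3 : (Finset.univ.filter (fun a : Fin (k + 1) => (a : ℕ) < e.1)) =
        Finset.Iio ⟨e.1, by omega⟩ := by ext a; simp [Fin.lt_def]
    rw [c3]; simp

/-- For a vexillary `π ∈ S_n` with largest descent position `k`, there is a
Grassmannian permutation `π̃ ∈ S_N` (for some `N ≥ n`) with unique descent at `k`
such that `Ess(π̃) = {(k, k - p + q) : (p,q) ∈ Ess(π)}` and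
`r_{π̃}(k, k - p + q) = k - p + r_π(p, q)` for each `(p,q) ∈ Ess(π)`
(all stated additively, avoiding truncated subtraction). -/
theorem stmt_13 {n : ℕ} (π : Equiv.Perm (Fin n)) (hvex : Vexillary π)
    (k : ℕ) (hk : Des π k) (hmax : ∀ m : ℕ, Des π m → m ≤ k) :
    ∃ N : ℕ, n ≤ N ∧ ∃ πt : Equiv.Perm (Fin N),
      (∀ m : ℕ, Des πt m ↔ m = k) ∧
      (∀ i j : ℕ, InEss πt i j ↔
        (i = k ∧ ∃ p q : ℕ, InEss π p q ∧ j + p = k + q)) ∧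
      (∀ p q j : ℕ, InEss π p q → j + p = k + q →
        rk πt k j + p = k + rk π p q) := by
  classical
  let B : Finset (ℕ × ℕ) := (Finset.range n ×ˢ Finset.range n).filter (fun b => InEss π b.1 b.2)
  have memB : ∀ p q, (p, q) ∈ B ↔ InEss π p q := by
    intro p q
    simp only [B, Finset.mem_filter, Finset.mem_product, Finset.mem_range]
    refine ⟨fun h => h.2, fun h => ⟨?_, h⟩⟩
    obtain ⟨hp, hq, _⟩ := h.1
    exact ⟨hp, hq⟩
  let f : ℕ × ℕ → ℕ × ℕ := fun b => (k + 1 - cntU π b.1 b.2, cntV π b.1 b.2)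
  have memE : ∀ e, e ∈ B.image f ↔ ∃ p q, InEss π p q ∧
      e = (k + 1 - cntU π p q, cntV π p q) := by
    intro e
    rw [Finset.mem_image]
    constructor
    · rintro ⟨⟨p, q⟩, h, rfl⟩; exact ⟨p, q, (memB p q).1 h, rfl⟩
    · rintro ⟨p, q, h, rfl⟩; exact ⟨(p, q), (memB p q).2 h, rfl⟩
  have data : ∀ p q, InEss π p q → p ≤ k ∧ q < n ∧ rk π p q + cntU π p q = p + 1 ∧
      rk π p q + cntV π p q = q + 1 ∧ 0 < cntU π p q ∧ 0 < cntV π p q := by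
    intro p q h
    obtain ⟨hp, hq, _⟩ := h.1
    exact ⟨hmax p (ess_des π h), hq, rk_add_cntU π q hp, rk_add_cntV π p hq,
      cntU_pos π h, cntV_pos π h⟩
  obtain ⟨w, hw1, hw2, hw3⟩ := grass_of_chain k n (B.image f)
    (by obtain ⟨q, hq⟩ := exists_ess π hk
        exact ⟨_, (memE _).2 ⟨k, q, hq, rfl⟩⟩)
    (by intro e he
        obtain ⟨p, q, h, rfl⟩ := (memE e).1 he
        have := data p q h
        simp only; omega)
    (by intro e he
        obtain ⟨p, q, h, rfl⟩ := (memE e).1 he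
        have := data p q h
        simp only; omega)
    (by intro e he
        obtain ⟨p, q, h, rfl⟩ := (memE e).1 he
        exact (data p q h).2.2.2.2.2)
    (by intro e he e' he'
        obtain ⟨p, q, h, rfl⟩ := (memE e).1 he
        obtain ⟨p', q', h', rfl⟩ := (memE e').1 he'
        have d := data p q h
        have d' := data p' q' h'
        rcases chain_cmp π hvex h h' with ⟨rfl, rfl⟩ | hh | hh
        · exact Or.inl rfl
        · right; left; simp only; omega
        · right; right; simp only; omega)
  refine ⟨k + 1 + n, by omega, w, hw1, ?_, ?_⟩
  · intro i j
    rw [hw2]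
    refine and_congr_right fun _ => ?_
    constructor
    · rintro ⟨e, he, hj⟩
      obtain ⟨p, q, h, rfl⟩ := (memE e).1 he
      have := data p q h
      simp only at hj
      exact ⟨p, q, h, by omega⟩
    · rintro ⟨p, q, h, hj⟩
      have := data p q h
      exact ⟨_, (memE _).2 ⟨p, q, h, rfl⟩, by simp only; omega⟩
  · intro p q j h hj
    have := data p q h
    have h3 := hw3 _ ((memE _).2 ⟨p, q, h, rfl⟩) j (by simp only; omega)
    simp only at h3
    omega
end
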